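/- arXiv:2601.14312 — 3 statements merged into one kernel-verified Lean document; each statement's English description precedes it below -/
import Mathlib

section
/- For each integer n ≥ 1 define V_n = (8/n²) · ∫₀^{π/2} (sin^{2n+1}(u)/cos(u)) · ( ∫_u^{π/2} (1 − sin^{2n}(s))² / (sin^{2n−1}(s)·cos(s)) ds ) du. Then n²·V_n converges to π²/6 as n → ∞; equivalently V_n = π²/(6n²) + o(1/n²). -/
open Real Filter

/-!
Put `a = -2n log (sin u)`, so that `sin u ^ (2n) = exp (-a)` and `0 < u < π/2` becomes `0 < a < ∞`.
Since `cot² u = exp (a/n) - 1`, this turns `n² V_n / 4` into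
`∫₀^∞ exp (-a) / E_n(a) ∫₀^a (cosh b - 1) / E_n(b) db da` with `E_n(a) = n (exp (a/n) - 1)`.
As `E_n(a)` is at least `a` and tends to `a`, dominated convergence replaces `E_n(a)` by `a` in the
limit. Expanding `cosh b - 1` and integrating against `exp (-a)` term by term then gives
`∑ 1 / (2k+2)² = π² / 24`.
-/

section

open MeasureTheory Set Topology Interval

section IteratedIntegral

variable {ι E : Type*} [NormedAddCommGroup E] [NormedSpace ℝ E] {c : ℝ}

theorem continuousOn_intervalIntegral_Ioi {f : ℝ → E}
    (hf : ∀ x ∈ Ioi c, IntervalIntegrable f volume c x) :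
    ContinuousOn (fun x => ∫ y in c..x, f y) (Ioi c) := by
  intro x hx
  have hcx : c < x + 1 := lt_add_of_lt_of_pos hx one_pos
  have hcont : ContinuousOn (fun x => ∫ y in c..x, f y) (Icc c (x + 1)) := by
    simpa only [uIcc_of_le hcx.le] using
      intervalIntegral.continuousOn_primitive_interval' (hf (x + 1) hcx) left_mem_uIcc
  exact (hcont.continuousAt (Icc_mem_nhds hx (lt_add_one x))).continuousWithinAt

theorem tendsto_integral_Ioi_smul_intervalIntegral_of_dominated
    {l : Filter ι} [l.IsCountablyGenerated]
    {F : ι → ℝ → ℝ} {G : ι → ℝ → E} {F₀ : ℝ → ℝ} {G₀ : ℝ → E} {f g : ℝ → ℝ}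
    (hF_meas : ∀ᶠ i in l, AEStronglyMeasurable (F i) (volume.restrict (Ioi c)))
    (hG_meas : ∀ᶠ i in l, AEStronglyMeasurable (G i) (volume.restrict (Ioi c)))
    (hF_le : ∀ᶠ i in l, ∀ x ∈ Ioi c, ‖F i x‖ ≤ f x)
    (hG_le : ∀ᶠ i in l, ∀ x ∈ Ioi c, ‖G i x‖ ≤ g x)
    (hg : ∀ x ∈ Ioi c, IntervalIntegrable g volume c x)
    (hfg : IntegrableOn (fun x => f x * ∫ y in c..x, g y) (Ioi c))
    (hF : ∀ x ∈ Ioi c, Tendsto (F · x) l (𝓝 (F₀ x)))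
    (hG : ∀ x ∈ Ioi c, Tendsto (G · x) l (𝓝 (G₀ x))) :
    Tendsto (fun i => ∫ x in Ioi c, F i x • ∫ y in c..x, G i y) l
      (𝓝 (∫ x in Ioi c, F₀ x • ∫ y in c..x, G₀ y)) := by
  have uIoc_subset {x : ℝ} (hx : x ∈ Ioi c) : Ι c x ⊆ Ioi c :=
    uIoc_of_le (mem_Ioi.mp hx).le ▸ Ioc_subset_Ioi_self
  refine tendsto_integral_filter_of_dominated_convergence _ ?_ ?_ hfg ?_
  · filter_upwards [hF_meas, hG_meas, hG_le] with i hFi hGi hGi_le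
    refine hFi.smul (ContinuousOn.aestronglyMeasurable
      (continuousOn_intervalIntegral_Ioi fun x hx => (hg x hx).mono_fun'
        (hGi.mono_set (uIoc_subset hx)) ?_) measurableSet_Ioi)
    exact ae_restrict_of_forall_mem measurableSet_uIoc fun y hy => hGi_le y (uIoc_subset hx hy)
  · filter_upwards [hF_le, hG_le] with i hFi hGi
    refine ae_restrict_of_forall_mem measurableSet_Ioi fun x hx => ?_
    have hinner : ‖∫ y in c..x, G i y‖ ≤ ∫ y in c..x, g y :=
      intervalIntegral.norm_integral_le_of_norm_le (le_of_lt hx)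
        (ae_of_all _ fun y hy => hGi y hy.1) (hg x hx)
    rw [norm_smul]
    exact mul_le_mul (hFi x hx) hinner (norm_nonneg _) ((norm_nonneg _).trans (hFi x hx))
  · refine ae_restrict_of_forall_mem measurableSet_Ioi fun x hx => (hF x hx).smul ?_
    refine intervalIntegral.tendsto_integral_filter_of_dominated_convergence g ?_ ?_ (hg x hx) ?_
    · filter_upwards [hG_meas] with i hGi using hGi.mono_set (uIoc_subset hx)
    · filter_upwards [hG_le] with i hGi using ae_of_all _ fun y hy => hGi y (uIoc_subset hx hy)
    · exact ae_of_all _ fun y hy => hG y (uIoc_subset hx hy)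

end IteratedIntegral

theorem integral_exp_neg_mul_pow (m : ℕ) :
    ∫ a in Ioi (0 : ℝ), exp (-a) * a ^ m = m.factorial := by
  have h := Real.Gamma_eq_integral (s := (m : ℝ) + 1) (by positivity)
  simp only [add_sub_cancel_right, Real.rpow_natCast, Real.Gamma_nat_eq_factorial] at h
  exact h.symm

theorem integrableOn_exp_neg_mul_pow (m : ℕ) :
    IntegrableOn (fun a : ℝ => exp (-a) * a ^ m) (Ioi 0) :=
  .of_integral_ne_zero <| by rw [integral_exp_neg_mul_pow]; positivity

theorem hasSum_cosh_sub_one_div (b : ℝ) :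
    HasSum (fun k : ℕ => b ^ (2 * k + 1) / (2 * k + 2).factorial) ((cosh b - 1) / b) := by
  have h := ((hasSum_nat_add_iff' 1).mpr (Real.hasSum_cosh b)).div_const b
  simp only [Finset.range_one, Finset.sum_singleton, mul_zero, pow_zero, Nat.factorial_zero,
    Nat.cast_one, div_one] at h
  refine h.congr_fun fun k => ?_
  rcases eq_or_ne b 0 with rfl | hb
  · simp
  · rw [mul_add_one 2 k]
    field_simp
    ring

-- At `b = 0` both sides agree because `0 / 0 = 0` is the derivative of `cosh` there.
theorem cosh_sub_one_div_eq_dslope (b : ℝ) : (cosh b - 1) / b = dslope cosh 0 b := by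
  rcases eq_or_ne b 0 with rfl | hb
  · simp
  · rw [dslope_of_ne _ hb, slope_def_field, cosh_zero, sub_zero]

theorem continuous_cosh_sub_one_div : Continuous fun b : ℝ => (cosh b - 1) / b := by
  simp only [cosh_sub_one_div_eq_dslope]
  rw [← continuousOn_univ, continuousOn_dslope univ_mem]
  exact ⟨continuous_cosh.continuousOn, differentiable_cosh 0⟩

theorem hasSum_integral_cosh_sub_one_div {a : ℝ} (ha : 0 ≤ a) :
    HasSum (fun k : ℕ => a ^ (2 * k + 2) / ((2 * k + 2) * (2 * k + 2).factorial))
      (∫ b in 0..a, (cosh b - 1) / b) := by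
  let F (k : ℕ) (b : ℝ) : ℝ := b ^ (2 * k + 1) / (2 * k + 2).factorial
  have integral_F (k : ℕ) :
      ∫ b in 0..a, F k b = a ^ (2 * k + 2) / ((2 * k + 2) * (2 * k + 2).factorial) := by
    rw [intervalIntegral.integral_div, integral_pow]
    push_cast
    field_simp
    ring
  have norm_F_le (k : ℕ) (b : ℝ) (hb : b ∈ Ι 0 a) : ‖F k b‖ ≤ F k b := by
    rw [uIoc_of_le ha] at hb
    have hb₀ : 0 < b := hb.1
    exact (Real.norm_of_nonneg (by positivity)).le
  have tsum_F : (fun b => ∑' k, F k b) = fun b => (cosh b - 1) / b :=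
    funext fun b => (hasSum_cosh_sub_one_div b).tsum_eq
  simp only [← integral_F]
  exact intervalIntegral.hasSum_integral_of_dominated_convergence F
    (fun k => (by fun_prop : Continuous (F k)).aestronglyMeasurable)
    (fun k => ae_of_all _ (norm_F_le k))
    (ae_of_all _ fun b _ => (hasSum_cosh_sub_one_div b).summable)
    (tsum_F ▸ continuous_cosh_sub_one_div.intervalIntegrable 0 a)
    (ae_of_all _ fun b _ => hasSum_cosh_sub_one_div b)

theorem hasSum_one_div_even_sq :
    HasSum (fun k : ℕ => 1 / (2 * (k : ℝ) + 2) ^ 2) (π ^ 2 / 24) := by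
  have h := ((hasSum_nat_add_iff' 1).mpr hasSum_zeta_two).div_const 4
  have hsum : (π ^ 2 / 6 - ∑ i ∈ Finset.range 1, 1 / (i : ℝ) ^ 2) / 4 = π ^ 2 / 24 := by
    rw [Finset.sum_range_one, Nat.cast_zero]
    ring
  rw [← hsum]
  refine h.congr_fun fun k => ?_
  push_cast
  field_simp
  norm_num

theorem integral_exp_neg_div_mul_integral_cosh_sub_one_div :
    ∫ a in Ioi (0 : ℝ), exp (-a) / a * ∫ b in 0..a, (cosh b - 1) / b = π ^ 2 / 24 := by
  let F (k : ℕ) (a : ℝ) : ℝ :=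
    1 / ((2 * k + 2) * (2 * k + 2).factorial) * (exp (-a) * a ^ (2 * k + 1))
  have integral_F (k : ℕ) : ∫ a in Ioi 0, F k a = 1 / (2 * k + 2) ^ 2 := by
    rw [integral_const_mul, integral_exp_neg_mul_pow, Nat.factorial_succ (2 * k + 1)]
    push_cast
    field_simp
    ring
  have integral_norm_F (k : ℕ) : ∫ a in Ioi 0, ‖F k a‖ = 1 / (2 * k + 2) ^ 2 := by
    rw [← integral_F]
    refine setIntegral_congr_fun measurableSet_Ioi fun a ha => Real.norm_of_nonneg ?_
    have : 0 < a := ha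
    positivity
  have hasSum_F {a : ℝ} (ha : a ∈ Ioi 0) :
      HasSum (F · a) (exp (-a) / a * ∫ b in 0..a, (cosh b - 1) / b) := by
    have ha₀ : a ≠ 0 := ne_of_gt ha
    refine ((hasSum_integral_cosh_sub_one_div (le_of_lt ha)).mul_left (exp (-a) / a)).congr_fun
      fun k => ?_
    simp only [F]
    field_simp
    ring
  have h := hasSum_integral_of_summable_integral_norm (μ := volume.restrict (Ioi 0)) (F := F)
    (fun k => (integrableOn_exp_neg_mul_pow _).const_mul _)
    (by simpa only [integral_norm_F] using hasSum_one_div_even_sq.summable)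
  simp only [integral_F] at h
  rw [← h.unique hasSum_one_div_even_sq]
  exact setIntegral_congr_fun measurableSet_Ioi fun a ha => (hasSum_F ha).tsum_eq.symm

section ScaledExpSubOne

/-- The function `E_c(a) = c (exp (a / c) - 1)`, which tends to `a` as `c → ∞`. -/
noncomputable def scaledExpSubOne (c a : ℝ) : ℝ := c * (exp (a / c) - 1)

variable {c : ℝ}

theorem le_scaledExpSubOne (hc : 0 < c) (a : ℝ) : a ≤ scaledExpSubOne c a := calc
  a = c * (a / c) := (mul_div_cancel₀ a hc.ne').symm
  _ ≤ c * (exp (a / c) - 1) := by gcongr; linarith [add_one_le_exp (a / c)]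

theorem continuous_scaledExpSubOne (c : ℝ) : Continuous (scaledExpSubOne c) := by
  unfold scaledExpSubOne
  fun_prop

theorem tendsto_scaledExpSubOne (a : ℝ) : Tendsto (scaledExpSubOne · a) atTop (𝓝 a) := by
  simpa [scaledExpSubOne, div_eq_inv_mul] using (hasDerivAt_exp 0).hasFDerivAt.lim_real a

theorem norm_div_scaledExpSubOne_le (hc : 0 < c) {a x : ℝ} (ha : 0 < a) (hx : 0 ≤ x) :
    ‖x / scaledExpSubOne c a‖ ≤ x / a := by
  have hle := le_scaledExpSubOne hc a
  rw [Real.norm_of_nonneg (div_nonneg hx (ha.le.trans hle))]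
  gcongr

theorem tendsto_integral_exp_neg_div_scaledExpSubOne :
    Tendsto (fun c => ∫ a in Ioi (0 : ℝ), exp (-a) / scaledExpSubOne c a *
      ∫ b in 0..a, (cosh b - 1) / scaledExpSubOne c b) atTop (𝓝 (π ^ 2 / 24)) := by
  have meas_div {f : ℝ → ℝ} (hf : Measurable f) (c : ℝ) :
      AEStronglyMeasurable (fun a => f a / scaledExpSubOne c a) (volume.restrict (Ioi 0)) :=
    (hf.div (continuous_scaledExpSubOne c).measurable).aestronglyMeasurable
  have tendsto_div (x : ℝ) {a : ℝ} (ha : a ∈ Ioi 0) :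
      Tendsto (fun c => x / scaledExpSubOne c a) atTop (𝓝 (x / a)) :=
    tendsto_const_nhds.div (tendsto_scaledExpSubOne a) (ne_of_gt ha)
  rw [← integral_exp_neg_div_mul_integral_cosh_sub_one_div]
  refine tendsto_integral_Ioi_smul_intervalIntegral_of_dominated (f := fun a => exp (-a) / a)
    (.of_forall (meas_div (by fun_prop))) (.of_forall (meas_div (by fun_prop))) ?_ ?_
    (fun a _ => continuous_cosh_sub_one_div.intervalIntegrable 0 a) ?_
    (fun a ha => tendsto_div _ ha) (fun b hb => tendsto_div _ hb)
  · filter_upwards [eventually_gt_atTop 0] with c hc a ha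
    exact norm_div_scaledExpSubOne_le hc ha (exp_pos _).le
  · filter_upwards [eventually_gt_atTop 0] with c hc b hb
    exact norm_div_scaledExpSubOne_le hc hb (sub_nonneg.mpr (one_le_cosh b))
  · refine .of_integral_ne_zero ?_
    rw [integral_exp_neg_div_mul_integral_cosh_sub_one_div]
    positivity

end ScaledExpSubOne

section LogSinCoord

/-- The coordinate `a = -2c log (sin u)` on `(0, π/2)`, for which `(sin u) ^ (2c) = exp (-a)`. -/
noncomputable def logSinCoord (c u : ℝ) : ℝ := -(2 * c * log (sin u))

variable {c u : ℝ}

theorem sin_pos_of_mem_Ioc_zero_pi_div_two (hu : u ∈ Ioc 0 (π / 2)) : 0 < sin u :=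
  sin_pos_of_pos_of_lt_pi hu.1 (by linarith [hu.2, pi_pos])

theorem cos_pos_of_mem_Ioo_zero_pi_div_two (hu : u ∈ Ioo 0 (π / 2)) : 0 < cos u :=
  cos_pos_of_mem_Ioo ⟨by linarith [hu.1, pi_pos], hu.2⟩

@[simp]
theorem logSinCoord_pi_div_two (c : ℝ) : logSinCoord c (π / 2) = 0 := by simp [logSinCoord]

theorem hasDerivAt_logSinCoord (c : ℝ) (hu : sin u ≠ 0) :
    HasDerivAt (logSinCoord c) (-(2 * c * (cos u / sin u))) u :=
  (((hasDerivAt_sin u).log hu).const_mul _).neg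

theorem strictAntiOn_logSinCoord (hc : 0 < c) :
    StrictAntiOn (logSinCoord c) (Ioc 0 (π / 2)) := by
  intro u hu v hv huv
  have hsin : sin u < sin v :=
    sin_lt_sin_of_lt_of_le_pi_div_two (by linarith [hu.1, pi_pos]) hv.2 huv
  have hlog := log_lt_log (sin_pos_of_mem_Ioc_zero_pi_div_two hu) hsin
  exact neg_lt_neg (mul_lt_mul_of_pos_left hlog (by positivity))

theorem logSinCoord_pos (hc : 0 < c) (hu : u ∈ Ioo 0 (π / 2)) : 0 < logSinCoord c u := by
  simpa using strictAntiOn_logSinCoord hc ⟨hu.1, hu.2.le⟩ ⟨by positivity, le_rfl⟩ hu.2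

theorem surjOn_logSinCoord (hc : 0 < c) :
    SurjOn (logSinCoord c) (Ioo 0 (π / 2)) (Ioi 0) := by
  intro a ha
  have hexp_pos := exp_pos (-(a / (2 * c)))
  have hexp_lt : exp (-(a / (2 * c))) < 1 :=
    Real.exp_lt_one_iff.mpr (neg_neg_of_pos (div_pos ha (by positivity)))
  refine ⟨arcsin (exp (-(a / (2 * c)))),
    ⟨arcsin_pos.mpr hexp_pos, arcsin_lt_pi_div_two.mpr hexp_lt⟩, ?_⟩
  rw [logSinCoord, sin_arcsin (by linarith) hexp_lt.le, log_exp]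
  field_simp

theorem image_logSinCoord_Ioo_zero (hc : 0 < c) :
    logSinCoord c '' Ioo 0 (π / 2) = Ioi 0 :=
  (surjOn_logSinCoord hc).image_eq_of_mapsTo fun _ hu => logSinCoord_pos hc hu

theorem image_logSinCoord_Ioo (hc : 0 < c) (hu : u ∈ Ioc 0 (π / 2)) :
    logSinCoord c '' Ioo u (π / 2) = Ioo 0 (logSinCoord c u) := by
  have hanti := strictAntiOn_logSinCoord hc
  ext a
  constructor
  · rintro ⟨v, hv, rfl⟩
    have hv' : v ∈ Ioo 0 (π / 2) := ⟨hu.1.trans hv.1, hv.2⟩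
    exact ⟨logSinCoord_pos hc hv', hanti hu ⟨hv'.1, hv'.2.le⟩ hv.1⟩
  · rintro ⟨ha, hau⟩
    obtain ⟨v, hv, rfl⟩ := surjOn_logSinCoord hc ha
    exact ⟨v, ⟨(hanti.lt_iff_gt ⟨hv.1, hv.2.le⟩ hu).mp hau, hv.2⟩, rfl⟩

theorem integral_image_logSinCoord {E : Type*} [NormedAddCommGroup E] [NormedSpace ℝ E]
    (hc : 0 < c) {s : Set ℝ} (hs : MeasurableSet s) (hs_sub : s ⊆ Ioo 0 (π / 2)) (f : ℝ → E) :
    ∫ a in logSinCoord c '' s, f a =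
      ∫ u in s, (2 * c * (cos u / sin u)) • f (logSinCoord c u) := by
  have hs_sub' : s ⊆ Ioc 0 (π / 2) := hs_sub.trans Ioo_subset_Ioc_self
  simpa only [neg_neg] using integral_image_eq_integral_deriv_smul_of_antitoneOn hs
    (fun u hu => (hasDerivAt_logSinCoord c
      (sin_pos_of_mem_Ioc_zero_pi_div_two (hs_sub' hu)).ne').hasDerivWithinAt)
    ((strictAntiOn_logSinCoord hc).mono hs_sub').antitoneOn f

theorem exp_neg_logSinCoord (n : ℕ) (hu : sin u ≠ 0) :
    exp (-logSinCoord n u) = sin u ^ (2 * n) := by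
  have hlog : -logSinCoord n u = log (sin u ^ (2 * n)) := by simp [logSinCoord]
  rw [hlog, exp_log ((even_two_mul n).pow_pos hu)]

theorem cosh_logSinCoord_sub_one (n : ℕ) (hu : sin u ≠ 0) :
    cosh (logSinCoord n u) - 1 = (1 - sin u ^ (2 * n)) ^ 2 / (2 * sin u ^ (2 * n)) := by
  rw [← cosh_neg, cosh_eq, exp_neg (-_), exp_neg_logSinCoord n hu]
  field_simp
  ring

theorem scaledExpSubOne_logSinCoord (hc : c ≠ 0) (hu : sin u ≠ 0) :
    scaledExpSubOne c (logSinCoord c u) = c * (cos u / sin u) ^ 2 := by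
  have hlog : logSinCoord c u / c = -log (sin u ^ 2) := by
    rw [logSinCoord, log_pow]
    push_cast
    field_simp
  have hexp : exp (logSinCoord c u / c) = (sin u ^ 2)⁻¹ := by
    rw [hlog, exp_neg, exp_log (by positivity)]
  rw [scaledExpSubOne, hexp, div_pow, cos_sq']
  field_simp

end LogSinCoord

section Substitution

variable {n : ℕ}

theorem integral_cosh_sub_one_div_scaledExpSubOne_logSinCoord (hn : n ≠ 0) {u : ℝ}
    (hu : u ∈ Ioo 0 (π / 2)) :
    ∫ b in 0..logSinCoord n u, (cosh b - 1) / scaledExpSubOne n b =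
      ∫ s in u..(π / 2), (1 - sin s ^ (2 * n)) ^ 2 / (sin s ^ (2 * n - 1) * cos s) := by
  have hn₀ : (0 : ℝ) < n := by exact_mod_cast Nat.pos_of_ne_zero hn
  rw [intervalIntegral.integral_of_le (logSinCoord_pos hn₀ hu).le,
    intervalIntegral.integral_of_le hu.2.le, integral_Ioc_eq_integral_Ioo,
    integral_Ioc_eq_integral_Ioo, ← image_logSinCoord_Ioo hn₀ (Ioo_subset_Ioc_self hu),
    integral_image_logSinCoord hn₀ measurableSet_Ioo (Ioo_subset_Ioo_left hu.1.le)]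
  refine setIntegral_congr_fun measurableSet_Ioo fun s hs => ?_
  have hs' : s ∈ Ioo 0 (π / 2) := ⟨hu.1.trans hs.1, hs.2⟩
  have hsin := sin_pos_of_mem_Ioc_zero_pi_div_two (Ioo_subset_Ioc_self hs')
  have hcos := cos_pos_of_mem_Ioo_zero_pi_div_two hs'
  have hpow : sin s ^ (2 * n) = sin s ^ (2 * n - 1) * sin s :=
    (pow_sub_one_mul (by omega) _).symm
  simp only [smul_eq_mul]
  rw [cosh_logSinCoord_sub_one n hsin.ne', scaledExpSubOne_logSinCoord hn₀.ne' hsin.ne', hpow]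
  field_simp

theorem integral_exp_neg_div_scaledExpSubOne_eq_integral_sin_pow_div_cos (hn : n ≠ 0) :
    ∫ a in Ioi (0 : ℝ), exp (-a) / scaledExpSubOne n a *
        ∫ b in 0..a, (cosh b - 1) / scaledExpSubOne n b =
      2 * ∫ u in (0 : ℝ)..(π / 2), sin u ^ (2 * n + 1) / cos u *
        ∫ s in u..(π / 2), (1 - sin s ^ (2 * n)) ^ 2 / (sin s ^ (2 * n - 1) * cos s) := by
  have hn₀ : (0 : ℝ) < n := by exact_mod_cast Nat.pos_of_ne_zero hn
  rw [← image_logSinCoord_Ioo_zero hn₀,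
    integral_image_logSinCoord hn₀ measurableSet_Ioo Subset.rfl,
    intervalIntegral.integral_of_le (by positivity), integral_Ioc_eq_integral_Ioo,
    ← integral_const_mul]
  refine setIntegral_congr_fun measurableSet_Ioo fun u hu => ?_
  have hsin := sin_pos_of_mem_Ioc_zero_pi_div_two (Ioo_subset_Ioc_self hu)
  have hcos := cos_pos_of_mem_Ioo_zero_pi_div_two hu
  simp only [smul_eq_mul]
  rw [integral_cosh_sub_one_div_scaledExpSubOne_logSinCoord hn hu, exp_neg_logSinCoord n hsin.ne',
    scaledExpSubOne_logSinCoord hn₀.ne' hsin.ne']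
  field_simp
  ring

end Substitution

end

theorem cp_variance_asymptotics
    (V : ℕ → ℝ)
    (hV : ∀ n : ℕ, 1 ≤ n → V n = (8 / (n:ℝ)^2) *
      ∫ u in (0:ℝ)..(π/2), (Real.sin u ^ (2*n + 1) / Real.cos u) *
        ∫ s in u..(π/2),
          (1 - Real.sin s ^ (2*n))^2 / (Real.sin s ^ (2*n - 1) * Real.cos s)) :
    Tendsto (fun n : ℕ => (n:ℝ)^2 * V n) atTop (nhds (π^2 / 6)) := by
  have hlim := (tendsto_integral_exp_neg_div_scaledExpSubOne.comp
    tendsto_natCast_atTop_atTop).const_mul 4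
  rw [show 4 * (π ^ 2 / 24) = π ^ 2 / 6 by ring] at hlim
  refine hlim.congr' ?_
  filter_upwards [eventually_ge_atTop 1] with n hn
  have hn' : n ≠ 0 := Nat.one_le_iff_ne_zero.mp hn
  rw [Function.comp_apply, integral_exp_neg_div_scaledExpSubOne_eq_integral_sin_pow_div_cos hn',
    hV n hn]
  field_simp
  ring
end

section
/- For each integer n ≥ 1 define V_n = 8·(2n(2n+1))^{−2} · ∫₀^{π/2} (sin^{4n+1}(u)·(2n·cos²(u) + 1)² / cos³(u)) · ( ∫_u^{π/2} (1 − sin^{4n}(s)·(2n·cos²(s) + 1))² / (sin^{4n−1}(s)·cos³(s)) ds ) du. Then (2n+1)²·V_n converges, as n → ∞, to N := 2 ∫₀^{∞} ∫₀^{x} e^{y−x} · ((x+1)²/x²) · ((1 − e^{−y}(y+1))²/y²) dy dx, and this double integral N is finite. -/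
/-!
Substituting `x = m cos² u`, `y = m cos² s` with `m = 2n` turns `(2n + 1)² V n` into twice the
integral of `E x / E y * ((x + 1)² / x²) * ((1 - E y (y + 1))² / y²)` over the wedge `0 ≤ y ≤ x`,
where `E t = (1 - t / m)₊ ^ m`; the limit `N` is the same expression with `E t = e^{-t}`.
Both choices of `E` satisfy `1 - t ≤ E t` and make `e^t E t` nonincreasing with `E 0 = 1`. These
properties alone bound the integrand by `8 e^{y - x} / (1 + y²)`, which is integrable on the wedge,
so dominated convergence applies as `E` tends pointwise to `e^{-t}`.
-/

open Real Filter MeasureTheory Set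

/-- The region of integration of the limiting double integral. -/
def wedge : Set (ℝ × ℝ) := {p | 0 ≤ p.2 ∧ p.2 ≤ p.1}

theorem measurableSet_wedge : MeasurableSet wedge :=
  (measurableSet_le measurable_const measurable_snd).inter
    (measurableSet_le measurable_snd measurable_fst)

theorem setIntegral_wedge {G : Type*} [NormedAddCommGroup G] [NormedSpace ℝ G] {f : ℝ × ℝ → G}
    (hf : IntegrableOn f wedge) :
    ∫ p in wedge, f p = ∫ x in Ioi (0 : ℝ), ∫ y in (0 : ℝ)..x, f (x, y) := by
  have hslice (x : ℝ) : ∫ y, wedge.indicator f (x, y) =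
      (Ici (0 : ℝ)).indicator (fun x ↦ ∫ y in (0 : ℝ)..x, f (x, y)) x := by
    have hIcc (y : ℝ) :
        wedge.indicator f (x, y) = (Icc 0 x).indicator (fun y ↦ f (x, y)) y := rfl
    simp_rw [hIcc, integral_indicator measurableSet_Icc]
    rcases le_or_gt 0 x with hx | hx
    · rw [indicator_of_mem (mem_Ici.2 hx), intervalIntegral.integral_of_le hx,
        integral_Icc_eq_integral_Ioc]
    · rw [indicator_of_notMem (notMem_Ici.2 hx), Icc_eq_empty hx.not_ge, setIntegral_empty]
  rw [← integrable_indicator_iff measurableSet_wedge, Measure.volume_eq_prod] at hf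
  rw [← integral_indicator measurableSet_wedge, Measure.volume_eq_prod, integral_prod _ hf]
  simp_rw [hslice]
  rw [integral_indicator measurableSet_Ici, integral_Ici_eq_integral_Ioi]

theorem integrableOn_wedge_mul_exp_sub {f : ℝ → ℝ} (hf : Integrable f) :
    IntegrableOn (fun p : ℝ × ℝ ↦ f p.2 * exp (p.2 - p.1)) wedge := by
  have hexp : Integrable ((Ici (0 : ℝ)).indicator fun z ↦ exp (-z)) := by
    rw [integrable_indicator_iff measurableSet_Ici, integrableOn_Ici_iff_integrableOn_Ioi]
    exact integrableOn_exp_neg_Ioi 0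
  refine (hf.convolution_integrand (ContinuousLinearMap.mul ℝ ℝ) hexp).integrableOn.congr_fun
    (fun p hp ↦ ?_) measurableSet_wedge
  simp only [ContinuousLinearMap.mul_apply', indicator_of_mem (mem_Ici.2 (sub_nonneg.2 hp.2)),
    neg_sub]

/-- Functions lying between `1 - t` and `exp (-t)` on `[0, ∞)` and decaying at least as fast as
`exp (-t)`: the common properties of `exp (-t)` and of its approximants `truncPow m` that dominate
`varianceKernel`. -/
structure IsExpProfile (E : ℝ → ℝ) : Prop where
  measurable : Measurable E
  nonneg : ∀ t, 0 ≤ E t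
  map_zero : E 0 = 1
  one_sub_le : ∀ t, 0 ≤ t → 1 - t ≤ E t
  le_exp_sub_mul : ∀ y x, 0 ≤ y → y ≤ x → E x ≤ exp (y - x) * E y

theorem isExpProfile_exp_neg : IsExpProfile fun t ↦ exp (-t) where
  measurable := by fun_prop
  nonneg t := (exp_pos _).le
  map_zero := by simp
  one_sub_le t _ := one_sub_le_exp_neg t
  le_exp_sub_mul y x _ _ := by rw [← exp_add]; ring_nf; rfl

theorem isExpProfile_max_one_sub : IsExpProfile fun t ↦ max (1 - t) 0 where
  measurable := by fun_prop
  nonneg t := le_max_right _ _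
  map_zero := by simp
  one_sub_le t _ := le_max_left _ _
  le_exp_sub_mul y x hy hyx := by
    refine max_le ?_ (by positivity)
    rcases le_total 1 y with h1y | hy1
    · exact (by linarith : 1 - x ≤ 0).trans (by positivity)
    calc 1 - x ≤ (y - x + 1) * (1 - y) := by nlinarith
      _ ≤ exp (y - x) * (1 - y) := by gcongr; exact add_one_le_exp _
      _ ≤ exp (y - x) * max (1 - y) 0 := by gcongr; exact le_max_left _ _

namespace IsExpProfile

variable {E : ℝ → ℝ}

theorem comp_div_pow (hE : IsExpProfile E) {m : ℕ} (hm : m ≠ 0) :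
    IsExpProfile fun t ↦ E (t / m) ^ m where
  measurable := by have := hE.measurable; fun_prop
  nonneg t := pow_nonneg (hE.nonneg _) _
  map_zero := by simp [hE.map_zero]
  one_sub_le t ht := by
    have hm' : (m : ℝ) ≠ 0 := Nat.cast_ne_zero.2 hm
    calc 1 - t = 1 + m * (1 - t / m - 1) := by field_simp; ring
      _ ≤ 1 + m * (E (t / m) - 1) := by gcongr; exact hE.one_sub_le _ (by positivity)
      _ ≤ E (t / m) ^ m := one_add_mul_sub_le_pow (by linarith [hE.nonneg (t / m)]) m
  le_exp_sub_mul y x hy hyx := by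
    have hm' : (m : ℝ) ≠ 0 := Nat.cast_ne_zero.2 hm
    calc E (x / m) ^ m ≤ (exp (y / m - x / m) * E (y / m)) ^ m := by
          gcongr
          · exact hE.nonneg _
          · exact hE.le_exp_sub_mul _ _ (by positivity) (by gcongr)
      _ = exp (y - x) * E (y / m) ^ m := by
          rw [mul_pow, ← exp_nat_mul]
          congr 2
          field_simp

theorem le_exp_neg (hE : IsExpProfile E) {t : ℝ} (ht : 0 ≤ t) : E t ≤ exp (-t) := by
  simpa [hE.map_zero] using hE.le_exp_sub_mul 0 t le_rfl ht

theorem mul_add_one_le_one (hE : IsExpProfile E) {t : ℝ} (ht : 0 ≤ t) : E t * (t + 1) ≤ 1 :=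
  calc E t * (t + 1) ≤ exp (-t) * exp t := by
        gcongr
        exacts [hE.le_exp_neg ht, add_one_le_exp t]
    _ = 1 := by rw [← exp_add, neg_add_cancel, exp_zero]

theorem one_sub_mul_add_one_le_sq (hE : IsExpProfile E) {t : ℝ} (ht : 0 ≤ t) :
    1 - E t * (t + 1) ≤ t ^ 2 := by
  nlinarith [hE.one_sub_le t ht]

theorem div_le_exp_sub (hE : IsExpProfile E) {x y : ℝ} (hy : 0 ≤ y) (hyx : y ≤ x) :
    E x / E y ≤ exp (y - x) :=
  div_le_of_le_mul₀ (hE.nonneg y) (exp_pos _).le (hE.le_exp_sub_mul y x hy hyx)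

end IsExpProfile

/-- The integrand of the rescaled variance in the coordinates `x = m cos² u`, `y = m cos² s`, with
`E t` standing for `(1 - t / m) ^ m` or for its limit `exp (-t)`. -/
noncomputable def varianceKernel (E : ℝ → ℝ) (x y : ℝ) : ℝ :=
  E x / E y * ((x + 1) ^ 2 / x ^ 2) * ((1 - E y * (y + 1)) ^ 2 / y ^ 2)

theorem varianceKernel_exp_neg (x y : ℝ) :
    varianceKernel (fun t ↦ exp (-t)) x y =
      exp (y - x) * ((x + 1) ^ 2 / x ^ 2) * ((1 - exp (-y) * (y + 1)) ^ 2 / y ^ 2) := by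
  rw [varianceKernel, ← exp_sub, neg_sub_neg]

theorem measurable_varianceKernel {E : ℝ → ℝ} (hE : Measurable E) :
    Measurable fun p : ℝ × ℝ ↦ varianceKernel E p.1 p.2 := by
  unfold varianceKernel
  fun_prop

theorem tendsto_varianceKernel {ι : Type*} {l : Filter ι} {E : ι → ℝ → ℝ} {E₀ : ℝ → ℝ} {x y : ℝ}
    (hx : Tendsto (E · x) l (nhds (E₀ x))) (hy : Tendsto (E · y) l (nhds (E₀ y)))
    (hy₀ : E₀ y ≠ 0) :
    Tendsto (fun i ↦ varianceKernel (E i) x y) l (nhds (varianceKernel E₀ x y)) :=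
  ((hx.div hy hy₀).mul_const _).mul ((((hy.mul_const _).const_sub 1).pow 2).div_const _)

theorem add_one_sq_div_sq_mul_sq_div_sq_le {x y a : ℝ} (hy : 0 < y) (hyx : y ≤ x) (ha₀ : 0 ≤ a)
    (ha₁ : a ≤ 1) (hay : a ≤ y ^ 2) :
    (x + 1) ^ 2 / x ^ 2 * (a ^ 2 / y ^ 2) ≤ 8 * (1 + y ^ 2)⁻¹ := by
  have hx : 0 < x := hy.trans_le hyx
  have hratio : (x + 1) / x ≤ (y + 1) / y := by
    rw [div_le_div_iff₀ hx hy]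
    linarith
  have ha : (1 + y ^ 2) * a ≤ 2 * y ^ 2 := by nlinarith
  calc (x + 1) ^ 2 / x ^ 2 * (a ^ 2 / y ^ 2)
      = ((x + 1) / x) ^ 2 * (a ^ 2 / y ^ 2) := by rw [div_pow]
    _ ≤ ((y + 1) / y) ^ 2 * (a ^ 2 / y ^ 2) := by gcongr
    _ = (y + 1) ^ 2 * a ^ 2 / y ^ 4 := by field_simp
    _ ≤ 2 * (1 + y ^ 2) * a ^ 2 / y ^ 4 := by gcongr; nlinarith [sq_nonneg (y - 1)]
    _ = 2 * ((1 + y ^ 2) * a) ^ 2 / y ^ 4 * (1 + y ^ 2)⁻¹ := by field_simp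
    _ ≤ 2 * (2 * y ^ 2) ^ 2 / y ^ 4 * (1 + y ^ 2)⁻¹ := by gcongr
    _ = 8 * (1 + y ^ 2)⁻¹ := by field_simp; norm_num

theorem integrableOn_wedge_inv_one_add_sq_mul_exp_sub :
    IntegrableOn (fun p : ℝ × ℝ ↦ 8 * (1 + p.2 ^ 2)⁻¹ * exp (p.2 - p.1)) wedge :=
  integrableOn_wedge_mul_exp_sub (integrable_inv_one_add_sq.const_mul 8)

namespace IsExpProfile

variable {E : ℝ → ℝ}

theorem norm_varianceKernel_le (hE : IsExpProfile E) {x y : ℝ} (hy : 0 ≤ y) (hyx : y ≤ x) :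
    ‖varianceKernel E x y‖ ≤ 8 * (1 + y ^ 2)⁻¹ * exp (y - x) := by
  have hratio : 0 ≤ E x / E y := div_nonneg (hE.nonneg x) (hE.nonneg y)
  rcases hy.eq_or_lt with rfl | hy'
  · -- Division by zero makes the kernel vanish on the boundary `y = 0`.
    simp only [varianceKernel, ne_eq, OfNat.ofNat_ne_zero, not_false_eq_true, zero_pow, div_zero,
      mul_zero, norm_zero]
    positivity
  have hfactor := add_one_sq_div_sq_mul_sq_div_sq_le hy' hyx
    (sub_nonneg.2 (hE.mul_add_one_le_one hy))
    (sub_le_self 1 (mul_nonneg (hE.nonneg y) (by positivity))) (hE.one_sub_mul_add_one_le_sq hy)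
  rw [varianceKernel, norm_of_nonneg (by positivity), mul_assoc, mul_comm]
  gcongr
  exact hE.div_le_exp_sub hy hyx

theorem ae_norm_varianceKernel_le (hE : IsExpProfile E) :
    ∀ᵐ p ∂volume.restrict wedge,
      ‖varianceKernel E p.1 p.2‖ ≤ 8 * (1 + p.2 ^ 2)⁻¹ * exp (p.2 - p.1) :=
  ae_restrict_of_forall_mem measurableSet_wedge fun _ hp ↦ hE.norm_varianceKernel_le hp.1 hp.2

theorem integrableOn_varianceKernel (hE : IsExpProfile E) :
    IntegrableOn (fun p : ℝ × ℝ ↦ varianceKernel E p.1 p.2) wedge :=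
  integrableOn_wedge_inv_one_add_sq_mul_exp_sub.mono'
    (measurable_varianceKernel hE.measurable).aestronglyMeasurable hE.ae_norm_varianceKernel_le

end IsExpProfile

theorem tendsto_integral_varianceKernel {ι : Type*} {l : Filter ι} [l.IsCountablyGenerated]
    {E : ι → ℝ → ℝ} {E₀ : ℝ → ℝ} (hE : ∀ᶠ i in l, IsExpProfile (E i)) (hE₀ : IsExpProfile E₀)
    (hpos : ∀ t, 0 ≤ t → 0 < E₀ t) (hlim : ∀ t, 0 ≤ t → Tendsto (E · t) l (nhds (E₀ t))) :
    Tendsto (fun i ↦ ∫ x in Ioi (0 : ℝ), ∫ y in (0 : ℝ)..x, varianceKernel (E i) x y) l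
      (nhds (∫ x in Ioi (0 : ℝ), ∫ y in (0 : ℝ)..x, varianceKernel E₀ x y)) := by
  rw [← setIntegral_wedge hE₀.integrableOn_varianceKernel]
  have hwedge : Tendsto (fun i ↦ ∫ p in wedge, varianceKernel (E i) p.1 p.2) l
      (nhds (∫ p in wedge, varianceKernel E₀ p.1 p.2)) := by
    refine tendsto_integral_filter_of_dominated_convergence _
      (hE.mono fun i hi ↦ (measurable_varianceKernel hi.measurable).aestronglyMeasurable)
      (hE.mono fun i hi ↦ hi.ae_norm_varianceKernel_le)
      integrableOn_wedge_inv_one_add_sq_mul_exp_sub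
      (ae_restrict_of_forall_mem measurableSet_wedge fun p hp ↦ ?_)
    exact tendsto_varianceKernel (hlim _ (hp.1.trans hp.2)) (hlim _ hp.1) (hpos _ hp.1).ne'
  exact hwedge.congr' (hE.mono fun i hi ↦ setIntegral_wedge hi.integrableOn_varianceKernel)

/-- The approximant `(1 - t / m)₊ ^ m` of `exp (-t)`. Truncating at `0` makes `varianceKernel`
vanish for `x ≥ m`, so that all `m` share the same region of integration. -/
noncomputable def truncPow (m : ℕ) (t : ℝ) : ℝ := max (1 - t / m) 0 ^ m

theorem isExpProfile_truncPow {m : ℕ} (hm : m ≠ 0) : IsExpProfile (truncPow m) :=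
  isExpProfile_max_one_sub.comp_div_pow hm

theorem tendsto_truncPow (t : ℝ) :
    Tendsto (fun m ↦ truncPow m t) atTop (nhds (exp (-t))) := by
  refine (tendsto_one_add_div_pow_exp (-t)).congr' ?_
  filter_upwards [tendsto_natCast_atTop_atTop.eventually_ge_atTop t] with m htm
  have hle : t / m ≤ 1 := div_le_one_of_le₀ htm m.cast_nonneg
  rw [truncPow, max_eq_left (sub_nonneg.2 hle), neg_div, sub_eq_add_neg]

theorem truncPow_eq_zero {m : ℕ} (hm : m ≠ 0) {t : ℝ} (ht : m ≤ t) : truncPow m t = 0 := by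
  have hle : 1 ≤ t / m := (one_le_div (by positivity)).2 ht
  rw [truncPow, max_eq_right (sub_nonpos.2 hle), zero_pow hm]

theorem truncPow_mul_cos_sq {m : ℕ} (hm : m ≠ 0) (u : ℝ) :
    truncPow m (m * cos u ^ 2) = sin u ^ (2 * m) := by
  have hm' : (m : ℝ) ≠ 0 := Nat.cast_ne_zero.2 hm
  rw [truncPow, mul_div_cancel_left₀ _ hm', ← sin_sq, max_eq_left (sq_nonneg _), pow_mul]

theorem integral_Ioi_varianceKernel_truncPow {m : ℕ} (hm : m ≠ 0) :
    ∫ x in Ioi (0 : ℝ), ∫ y in (0 : ℝ)..x, varianceKernel (truncPow m) x y =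
      ∫ x in (0 : ℝ)..m, ∫ y in (0 : ℝ)..x, varianceKernel (truncPow m) x y := by
  rw [intervalIntegral.integral_of_le m.cast_nonneg]
  refine setIntegral_eq_of_subset_of_forall_sdiff_eq_zero measurableSet_Ioi Ioc_subset_Ioi_self
    fun x hx ↦ ?_
  have hmx : (m : ℝ) ≤ x := le_of_not_ge fun hxm ↦ hx.2 ⟨hx.1, hxm⟩
  simp [varianceKernel, truncPow_eq_zero hm hmx]

theorem integral_comp_mul_cos_sq {c u : ℝ} (hc : 0 ≤ c) (hu₀ : 0 ≤ u) (hu : u ≤ π / 2)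
    (g : ℝ → ℝ) :
    ∫ y in (0 : ℝ)..c * cos u ^ 2, g y =
      ∫ s in u..π / 2, g (c * cos s ^ 2) * (2 * c * cos s * sin s) := by
  have hderiv (s : ℝ) : HasDerivAt (fun s ↦ c * cos s ^ 2) (-(2 * c * cos s * sin s)) s := by
    convert! ((hasDerivAt_cos s).pow 2).const_mul c using 1
    ring
  have hnonpos : ∀ s ∈ Ioo (min u (π / 2)) (max u (π / 2)), -(2 * c * cos s * sin s) ≤ 0 := by
    rw [min_eq_left hu, max_eq_right hu]
    intro s hs
    have hcos : 0 ≤ cos s := cos_nonneg_of_mem_Icc ⟨by linarith [hs.1], hs.2.le⟩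
    have hsin : 0 ≤ sin s := sin_nonneg_of_mem_Icc ⟨by linarith [hs.1], by linarith [hs.2]⟩
    exact neg_nonpos.2 (by positivity)
  have hsubst := intervalIntegral.integral_comp_mul_deriv_of_deriv_nonpos (g := g)
    (by fun_prop) (fun s _ ↦ hderiv s) hnonpos
  simp only [Function.comp_apply, mul_neg, intervalIntegral.integral_neg, cos_pi_div_two, ne_eq,
    OfNat.ofNat_ne_zero, not_false_eq_true, zero_pow, mul_zero] at hsubst
  rw [intervalIntegral.integral_symm, ← hsubst, neg_neg]

/-- The first covering time variance of the dual radial diffusion with volume density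
proportional to `sin (r / 2) ^ (2 * m - 1) * cos (r / 2) ^ 3`, after substituting `r = 2 u`. The
quaternionic projective space `ℍPⁿ` is the case `m = 2 * n`. -/
noncomputable def coverVariance (m : ℕ) : ℝ :=
  8 / ((m : ℝ) * (m + 1)) ^ 2 *
    ∫ u in (0 : ℝ)..π / 2, (sin u ^ (2 * m + 1) * (m * cos u ^ 2 + 1) ^ 2 / cos u ^ 3) *
      ∫ s in u..π / 2, (1 - sin s ^ (2 * m) * (m * cos s ^ 2 + 1)) ^ 2 /
        (sin s ^ (2 * m - 1) * cos s ^ 3)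

theorem varianceKernel_truncPow_mul_cos_sq {m : ℕ} (hm : m ≠ 0) {u s : ℝ} (hcu : cos u ≠ 0)
    (hss : sin s ≠ 0) (hcs : cos s ≠ 0) :
    2 * (varianceKernel (truncPow m) (m * cos u ^ 2) (m * cos s ^ 2) *
        (2 * m * cos s * sin s) * (2 * m * cos u * sin u)) =
      8 / (m : ℝ) ^ 2 * (sin u ^ (2 * m + 1) * (m * cos u ^ 2 + 1) ^ 2 / cos u ^ 3 *
        ((1 - sin s ^ (2 * m) * (m * cos s ^ 2 + 1)) ^ 2 /
          (sin s ^ (2 * m - 1) * cos s ^ 3))) := by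
  have hpow : sin s ^ (2 * m) = sin s ^ (2 * m - 1) * sin s := by
    rw [← pow_succ, Nat.sub_add_cancel (by lia)]
  rw [varianceKernel, truncPow_mul_cos_sq hm, truncPow_mul_cos_sq hm]
  generalize 1 - sin s ^ (2 * m) * (m * cos s ^ 2 + 1) = a
  rw [hpow, pow_succ (sin u)]
  field_simp
  ring

theorem sq_mul_coverVariance {m : ℕ} (hm : m ≠ 0) :
    (m + 1 : ℝ) ^ 2 * coverVariance m =
      2 * ∫ x in Ioi (0 : ℝ), ∫ y in (0 : ℝ)..x, varianceKernel (truncPow m) x y := by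
  have hsubst := integral_comp_mul_cos_sq m.cast_nonneg le_rfl pi_div_two_pos.le
    (fun x ↦ ∫ y in (0 : ℝ)..x, varianceKernel (truncPow m) x y)
  rw [cos_zero, one_pow, mul_one] at hsubst
  have hconst : (m + 1 : ℝ) ^ 2 * (8 / (m * (m + 1)) ^ 2) = 8 / m ^ 2 := by field_simp
  rw [coverVariance, ← mul_assoc, hconst, integral_Ioi_varianceKernel_truncPow hm, hsubst,
    ← intervalIntegral.integral_const_mul, ← intervalIntegral.integral_const_mul]
  refine intervalIntegral.integral_congr_Ioo_of_le pi_div_two_pos.le fun u hu ↦ ?_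
  have hcu : cos u ≠ 0 := (cos_pos_of_mem_Ioo ⟨by linarith [hu.1, pi_pos], hu.2⟩).ne'
  rw [integral_comp_mul_cos_sq m.cast_nonneg hu.1.le hu.2.le]
  simp only [← intervalIntegral.integral_const_mul, ← intervalIntegral.integral_mul_const]
  refine intervalIntegral.integral_congr_Ioo_of_le hu.2.le fun s hs ↦ ?_
  have hcs : cos s ≠ 0 := (cos_pos_of_mem_Ioo ⟨by linarith [hu.1, hs.1, pi_pos], hs.2⟩).ne'
  have hss : sin s ≠ 0 :=
    (sin_pos_of_pos_of_lt_pi (hu.1.trans hs.1) (by linarith [hs.2, pi_pos])).ne'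
  exact (varianceKernel_truncPow_mul_cos_sq hm hcu hss hcs).symm

theorem hp_variance_asymptotics_general :
    IntegrableOn (fun p : ℝ × ℝ ↦ varianceKernel (fun t ↦ exp (-t)) p.1 p.2) wedge ∧
      Tendsto (fun m : ℕ ↦ (m + 1 : ℝ) ^ 2 * coverVariance m) atTop
        (nhds (2 * ∫ x in Ioi (0 : ℝ), ∫ y in (0 : ℝ)..x,
          varianceKernel (fun t ↦ exp (-t)) x y)) := by
  refine ⟨isExpProfile_exp_neg.integrableOn_varianceKernel, ?_⟩
  have hne : ∀ᶠ m : ℕ in atTop, m ≠ 0 := eventually_ne_atTop 0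
  have hlim := tendsto_integral_varianceKernel (hne.mono fun m ↦ isExpProfile_truncPow)
    isExpProfile_exp_neg (fun t _ ↦ exp_pos _) (fun t _ ↦ tendsto_truncPow t)
  exact (hlim.const_mul 2).congr' (hne.mono fun m hm ↦ (sq_mul_coverVariance hm).symm)

theorem hp_variance_asymptotics
    (V : ℕ → ℝ)
    (hV : ∀ n : ℕ, 1 ≤ n → V n = 8 / ((2*(n:ℝ)) * (2*(n:ℝ) + 1))^2 *
      ∫ u in (0:ℝ)..(π/2),
        (Real.sin u ^ (4*n + 1) * (2*n * Real.cos u ^ 2 + 1)^2 / Real.cos u ^ 3) *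
          ∫ s in u..(π/2),
            (1 - Real.sin s ^ (4*n) * (2*n * Real.cos s ^ 2 + 1))^2 /
              (Real.sin s ^ (4*n - 1) * Real.cos s ^ 3))
    (F : ℝ → ℝ → ℝ)
    (hF : ∀ x y, F x y =
      Real.exp (y - x) * ((x + 1)^2 / x^2) * ((1 - Real.exp (-y) * (y + 1))^2 / y^2))
    (N : ℝ)
    (hN : N = 2 * ∫ x in Ioi (0:ℝ), ∫ y in (0:ℝ)..x, F x y) :
    IntegrableOn (fun p : ℝ × ℝ => F p.1 p.2) {p : ℝ × ℝ | 0 ≤ p.2 ∧ p.2 ≤ p.1} volume ∧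
      Tendsto (fun n : ℕ => (2*(n:ℝ) + 1)^2 * V n) atTop (nhds N) := by
  obtain rfl : F = varianceKernel fun t ↦ exp (-t) :=
    funext₂ fun x y ↦ (hF x y).trans (varianceKernel_exp_neg x y).symm
  have hV' : ∀ n : ℕ, 1 ≤ n → V n = coverVariance (2 * n) := fun n hn ↦ by
    rw [hV n hn, coverVariance, show 4 * n = 2 * (2 * n) by ring]
    push_cast
    rfl
  obtain ⟨hint, hlim⟩ := hp_variance_asymptotics_general
  refine ⟨hint, hN ▸ (hlim.comp (tendsto_id.const_mul_atTop' two_pos)).congr' ?_⟩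
  filter_upwards [eventually_ge_atTop 1] with n hn
  simp [hV' n hn]
end

section
/- The triple integral of e^{−h₁²/2}·e^{−h₂²/2}·e^{x²/2} over the region { (h₁, h₂, x) ∈ ℝ³ : 0 ≤ x ≤ h₁ and x ≤ h₂ } is finite and equals √(2π)·ln(2)/2. -/
open Real MeasureTheory

/-!
The integrand is `exp (-q)` with `q (h₁, h₂, x) = (h₁² + h₂² - x²) / 2` homogeneous of degree two,
and the region is the cone over the quadrant `[1, ∞) × [1, ∞)` placed at height `x = 1`.
Integrating along the rays `x ↦ (x a, x b, x)` first leaves `√(2π) / 2` times the integral of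
`(a² + b² - 1) ^ (-3/2)` over the quadrant. Its integral over `b` is `1 / (a (a + 1))`, and
`1 / (a (a + 1)) = 1 / a - 1 / (a + 1)` integrates to `log 2`.
-/

open Set Filter Topology Module

theorem integrable_and_integral_eq_of_lintegral_ofReal_eq {α : Type*} {m : MeasurableSpace α}
    {μ : Measure α} {f : α → ℝ} {c : ℝ} (hf : AEStronglyMeasurable f μ) (hf0 : 0 ≤ᵐ[μ] f)
    (hc : 0 ≤ c) (h : ∫⁻ a, ENNReal.ofReal (f a) ∂μ = ENNReal.ofReal c) :
    Integrable f μ ∧ ∫ a, f a ∂μ = c := by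
  refine ⟨⟨hf, ?_⟩, ?_⟩
  · rw [hasFiniteIntegral_iff_ofReal hf0, h]
    exact ENNReal.ofReal_lt_top
  · rw [integral_eq_lintegral_of_nonneg_ae hf0 hf, h, ENNReal.toReal_ofReal hc]

theorem setLIntegral_Ioi_of_hasDerivAt_of_nonneg {g g' : ℝ → ℝ} {a l : ℝ}
    (hderiv : ∀ x ∈ Ici a, HasDerivAt g (g' x) x) (hg' : ∀ x ∈ Ioi a, 0 ≤ g' x)
    (hg : Tendsto g atTop (𝓝 l)) :
    ∫⁻ x in Ioi a, ENNReal.ofReal (g' x) = ENNReal.ofReal (l - g a) := by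
  rw [← integral_Ioi_of_hasDerivAt_of_nonneg' hderiv hg' hg]
  exact (ofReal_integral_eq_lintegral_ofReal (integrableOn_Ioi_deriv_of_nonneg' hderiv hg' hg)
    (ae_restrict_of_forall_mem measurableSet_Ioi hg')).symm

theorem setLIntegral_Ioi_inv_sub_inv_add {c t : ℝ} (hc : 0 ≤ c) (ht : 0 < t) :
    ∫⁻ a in Ioi t, ENNReal.ofReal (a⁻¹ - (a + c)⁻¹) = ENNReal.ofReal (log (t + c) - log t) := by
  have hderiv : ∀ a ∈ Ici t, HasDerivAt (fun a ↦ -(log (a + c) - log a)) (a⁻¹ - (a + c)⁻¹) a := by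
    intro a ha
    have ha0 : 0 < a := ht.trans_le ha
    have hlog := (((hasDerivAt_id a).add_const c).log (by simp only [id]; positivity)).sub
      (hasDerivAt_log ha0.ne')
    exact hlog.neg.congr_deriv (by simp)
  have hnonneg : ∀ a ∈ Ioi t, 0 ≤ a⁻¹ - (a + c)⁻¹ := fun a ha ↦
    sub_nonneg.2 (inv_anti₀ (ht.trans ha) (le_add_of_nonneg_right hc))
  simpa using setLIntegral_Ioi_of_hasDerivAt_of_nonneg hderiv hnonneg
    (tendsto_log_comp_add_sub_log c).neg

theorem rpow_neg_three_halves {x : ℝ} (hx : 0 < x) : x ^ (-3 / 2 : ℝ) = (x * √x)⁻¹ := by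
  rw [show (-3 / 2 : ℝ) = -(1 + 1 / 2) by norm_num, rpow_neg hx.le, rpow_add hx, rpow_one,
    sqrt_eq_rpow]

theorem hasDerivAt_div_sqrt_add_sq {k b : ℝ} (h : 0 < k + b ^ 2) :
    HasDerivAt (fun b ↦ b / √(k + b ^ 2)) (k * (k + b ^ 2) ^ (-3 / 2 : ℝ)) b := by
  have hsqrt : HasDerivAt (fun b ↦ √(k + b ^ 2)) (2 * b / (2 * √(k + b ^ 2))) b := by
    simpa using ((hasDerivAt_pow 2 b).const_add k).sqrt h.ne'
  have hpos : 0 < √(k + b ^ 2) := sqrt_pos.2 h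
  have hsq : √(k + b ^ 2) ^ 2 = k + b ^ 2 := sq_sqrt h.le
  refine ((hasDerivAt_id b).div hsqrt hpos.ne').congr_deriv ?_
  simp only [id, rpow_neg_three_halves h, hsq]
  field_simp
  rw [hsq]
  ring

theorem tendsto_div_sqrt_add_sq_atTop (k : ℝ) :
    Tendsto (fun b ↦ b / √(k + b ^ 2)) atTop (𝓝 1) := by
  have hlim : Tendsto (fun b : ℝ ↦ (√(k / b ^ 2 + 1))⁻¹) atTop (𝓝 1) := by
    have hdiv : Tendsto (fun b : ℝ ↦ k / b ^ 2) atTop (𝓝 0) :=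
      tendsto_const_nhds.div_atTop (tendsto_pow_atTop two_ne_zero)
    simpa using ((hdiv.add_const 1).sqrt).inv₀ (by simp)
  refine hlim.congr' ?_
  filter_upwards [eventually_gt_atTop 0] with b hb
  have hfactor : k + b ^ 2 = b ^ 2 * (k / b ^ 2 + 1) := by field_simp
  rw [hfactor, sqrt_mul (sq_nonneg b), sqrt_sq hb.le, div_mul_cancel_left₀ hb.ne']

theorem setLIntegral_Ioi_add_sq_rpow {k : ℝ} (hk : 0 < k) (t : ℝ) :
    ∫⁻ b in Ioi t, ENNReal.ofReal ((k + b ^ 2) ^ (-3 / 2 : ℝ)) =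
      ENNReal.ofReal ((1 - t / √(k + t ^ 2)) / k) := by
  have hderiv : ∀ b ∈ Ici t,
      HasDerivAt (fun b ↦ b / √(k + b ^ 2) / k) ((k + b ^ 2) ^ (-3 / 2 : ℝ)) b := fun b _ ↦
    ((hasDerivAt_div_sqrt_add_sq (by positivity)).div_const k).congr_deriv
      (mul_div_cancel_left₀ _ hk.ne')
  rw [setLIntegral_Ioi_of_hasDerivAt_of_nonneg hderiv (fun b _ ↦ by positivity)
    ((tendsto_div_sqrt_add_sq_atTop k).div_const k), sub_div]

theorem setLIntegral_Ioi_pow_mul_exp_neg_mul_sq (d : ℕ) {b : ℝ} (hb : 0 < b) :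
    ∫⁻ x in Ioi 0, ENNReal.ofReal (x ^ d * exp (-b * x ^ 2)) =
      ENNReal.ofReal (Gamma ((d + 1) / 2) / 2 * b ^ (-(d + 1) / 2 : ℝ)) := by
  have hd : -1 < (d : ℝ) := neg_one_lt_zero.trans_le d.cast_nonneg
  have hint := integrableOn_rpow_mul_exp_neg_mul_rpow hd two_pos hb
  have hval := integral_rpow_mul_exp_neg_mul_rpow two_pos hd hb
  simp only [rpow_natCast, rpow_two] at hint hval
  rw [← ofReal_integral_eq_lintegral_ofReal hint, hval]
  · congr 1
    ring
  · exact ae_restrict_of_forall_mem measurableSet_Ioi fun x hx ↦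
      mul_nonneg (pow_nonneg (le_of_lt hx) d) (exp_pos _).le

/-- The cone in `E × ℝ` with apex the origin whose section at height `1` is `s`, for integrating
along rays. The section at height `x > 0` is `x • s`, stated as `x⁻¹ • v ∈ s` so that measurability
is inherited from `s`; the apex is excluded. -/
def coneOver {E : Type*} [SMul ℝ E] (s : Set E) : Set (E × ℝ) := {p | 0 < p.2 ∧ p.2⁻¹ • p.1 ∈ s}

theorem smul_mem_coneOver_iff {E : Type*} [MulAction ℝ E] {s : Set E} {v : E} {x : ℝ}
    (hx : 0 < x) : (x • v, x) ∈ coneOver s ↔ v ∈ s := by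
  simp [coneOver, hx, smul_smul, inv_mul_cancel₀ hx.ne']

theorem measurableSet_coneOver {E : Type*} [SMul ℝ E] [MeasurableSpace E] [MeasurableSMul₂ ℝ E]
    {s : Set E} (hs : MeasurableSet s) : MeasurableSet (coneOver s) :=
  (measurableSet_lt measurable_const measurable_snd).inter
    ((measurable_snd.inv.smul measurable_fst) hs)

section HaarMeasure

variable {E : Type*} [NormedAddCommGroup E] [NormedSpace ℝ E] [MeasurableSpace E] [BorelSpace E]
  [FiniteDimensional ℝ E] (μ : Measure E) [μ.IsAddHaarMeasure]

theorem lintegral_eq_pow_finrank_mul_lintegral_comp_smul {f : E → ENNReal} (hf : Measurable f)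
    {x : ℝ} (hx : 0 < x) :
    ∫⁻ v, f v ∂μ = ENNReal.ofReal (x ^ finrank ℝ E) * ∫⁻ v, f (x • v) ∂μ := by
  have hpow : 0 < x ^ finrank ℝ E := pow_pos hx _
  rw [← lintegral_map hf (measurable_const_smul x), Measure.map_addHaar_smul μ hx.ne',
    lintegral_smul_measure, smul_eq_mul, ← mul_assoc, abs_of_pos (inv_pos.2 hpow),
    ← ENNReal.ofReal_mul hpow.le, mul_inv_cancel₀ hpow.ne', ENNReal.ofReal_one, one_mul]

theorem setLIntegral_coneOver {s : Set E} (hs : MeasurableSet s) {f : E × ℝ → ENNReal}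
    (hf : Measurable f) :
    ∫⁻ p in coneOver s, f p ∂μ.prod volume =
      ∫⁻ v in s, (∫⁻ x in Ioi 0, ENNReal.ofReal (x ^ finrank ℝ E) * f (x • v, x)) ∂μ := by
  have hind : Measurable ((coneOver s).indicator f) := hf.indicator (measurableSet_coneOver hs)
  have hslice : ∀ x : ℝ, ∫⁻ v, (coneOver s).indicator f (v, x) ∂μ =
      (Ioi 0).indicator
        (fun x ↦ ∫⁻ v in s, ENNReal.ofReal (x ^ finrank ℝ E) * f (x • v, x) ∂μ) x := by
    intro x
    by_cases hx : 0 < x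
    · rw [indicator_of_mem (mem_Ioi.2 hx), ← lintegral_indicator hs,
        lintegral_eq_pow_finrank_mul_lintegral_comp_smul μ (by fun_prop) hx,
        ← lintegral_const_mul' _ _ ENNReal.ofReal_ne_top]
      refine lintegral_congr fun v ↦ ?_
      classical
      simp only [indicator_apply, smul_mem_coneOver_iff hx, mul_ite, mul_zero]
    · simp [coneOver, hx]
  rw [← lintegral_indicator (measurableSet_coneOver hs), lintegral_prod_symm _ hind.aemeasurable,
    lintegral_congr hslice, lintegral_indicator measurableSet_Ioi]
  exact lintegral_lintegral_swap (by unfold Function.uncurry; fun_prop)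

theorem setLIntegral_coneOver_exp_neg {s : Set E} (hs : MeasurableSet s) {q : E × ℝ → ℝ}
    (hq : Measurable q) (hq_pos : ∀ v ∈ s, 0 < q (v, 1))
    (hq_smul : ∀ v ∈ s, ∀ x > 0, q (x • v, x) = x ^ 2 * q (v, 1)) :
    ∫⁻ p in coneOver s, ENNReal.ofReal (exp (-q p)) ∂μ.prod volume =
      ∫⁻ v in s, ENNReal.ofReal (Gamma ((finrank ℝ E + 1) / 2) / 2 *
        q (v, 1) ^ (-(finrank ℝ E + 1) / 2 : ℝ)) ∂μ := by
  rw [setLIntegral_coneOver μ hs (by fun_prop)]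
  refine setLIntegral_congr_fun hs fun v hv ↦ ?_
  rw [← setLIntegral_Ioi_pow_mul_exp_neg_mul_sq _ (hq_pos v hv)]
  refine setLIntegral_congr_fun measurableSet_Ioi fun x hx ↦ ?_
  rw [← ENNReal.ofReal_mul (pow_nonneg (le_of_lt hx) _), hq_smul v hv x hx, neg_mul,
    mul_comm (x ^ 2)]

end HaarMeasure

theorem setLIntegral_Ioi_one_sq_add_sq_sub_one_rpow {a : ℝ} (ha : 1 < a) :
    ∫⁻ b in Ioi 1, ENNReal.ofReal ((a ^ 2 + b ^ 2 - 1) ^ (-3 / 2 : ℝ)) =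
      ENNReal.ofReal (a⁻¹ - (a + 1)⁻¹) := by
  have hk : 0 < a ^ 2 - 1 := by nlinarith
  simp_rw [add_sub_right_comm (a ^ 2)]
  rw [setLIntegral_Ioi_add_sq_rpow hk, one_pow, sub_add_cancel, sqrt_sq (by positivity)]
  congr 1
  field_simp
  ring

theorem setLIntegral_quadrant_sq_add_sq_sub_one_rpow :
    ∫⁻ v : ℝ × ℝ in Ici 1 ×ˢ Ici 1, ENNReal.ofReal ((v.1 ^ 2 + v.2 ^ 2 - 1) ^ (-3 / 2 : ℝ)) =
      ENNReal.ofReal (log 2) := by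
  rw [Measure.volume_eq_prod, ← Measure.prod_restrict, ← restrict_Ioi_eq_restrict_Ici,
    lintegral_prod _ (by fun_prop),
    setLIntegral_congr_fun measurableSet_Ioi fun a ha ↦
      setLIntegral_Ioi_one_sq_add_sq_sub_one_rpow ha,
    setLIntegral_Ioi_inv_sub_inv_add zero_le_one one_pos, one_add_one_eq_two, log_one, sub_zero]

theorem Gamma_three_halves_div_two_mul_half_rpow {c : ℝ} (hc : 0 ≤ c) :
    Gamma (3 / 2) / 2 * (c / 2) ^ (-3 / 2 : ℝ) = √(2 * π) / 2 * c ^ (-3 / 2 : ℝ) := by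
  have hGamma : Gamma (3 / 2) = √π / 2 := by
    rw [show (3 / 2 : ℝ) = 1 / 2 + 1 by norm_num, Gamma_add_one (by norm_num), Gamma_one_half_eq]
    ring
  rw [div_rpow hc two_pos.le, hGamma, rpow_neg_three_halves two_pos, sqrt_mul two_pos.le]
  field_simp

theorem setLIntegral_coneOver_quadrant_exp :
    ∫⁻ p : (ℝ × ℝ) × ℝ in coneOver (Ici 1 ×ˢ Ici 1),
        ENNReal.ofReal (exp (-((p.1.1 ^ 2 + p.1.2 ^ 2 - p.2 ^ 2) / 2))) =
      ENNReal.ofReal (√(2 * π) * log 2 / 2) := by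
  have hquadrant : MeasurableSet (Ici (1 : ℝ) ×ˢ Ici (1 : ℝ)) :=
    measurableSet_Ici.prod measurableSet_Ici
  have hpos : ∀ v ∈ Ici (1 : ℝ) ×ˢ Ici (1 : ℝ), 0 < v.1 ^ 2 + v.2 ^ 2 - 1 := by
    rintro ⟨a, b⟩ ⟨ha, hb⟩
    simp only [mem_Ici] at ha hb
    nlinarith
  rw [Measure.volume_eq_prod, setLIntegral_coneOver_exp_neg volume hquadrant
    (q := fun p ↦ (p.1.1 ^ 2 + p.1.2 ^ 2 - p.2 ^ 2) / 2) (by fun_prop)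
    (fun v hv ↦ by simpa using hpos v hv)
    (fun v _ x _ ↦ by simp only [Prod.smul_fst, Prod.smul_snd, smul_eq_mul]; ring)]
  have hfinrank : (finrank ℝ (ℝ × ℝ) : ℝ) + 1 = 3 := by norm_num
  simp only [hfinrank, one_pow]
  calc
    _ = ∫⁻ v : ℝ × ℝ in Ici 1 ×ˢ Ici 1, ENNReal.ofReal (√(2 * π) / 2) *
          ENNReal.ofReal ((v.1 ^ 2 + v.2 ^ 2 - 1) ^ (-3 / 2 : ℝ)) :=
      setLIntegral_congr_fun hquadrant fun v hv ↦ by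
        rw [Gamma_three_halves_div_two_mul_half_rpow (hpos v hv).le,
          ENNReal.ofReal_mul (by positivity)]
    _ = ENNReal.ofReal (√(2 * π) / 2) * ENNReal.ofReal (log 2) := by
      rw [lintegral_const_mul' _ _ ENNReal.ofReal_ne_top,
        setLIntegral_quadrant_sq_add_sq_sub_one_rpow]
    _ = ENNReal.ofReal (√(2 * π) * log 2 / 2) := by
      rw [← ENNReal.ofReal_mul (by positivity), div_mul_eq_mul_div]

theorem ae_eq_prodAssoc_symm_preimage_coneOver_quadrant :
    {p : ℝ × ℝ × ℝ | 0 ≤ p.2.2 ∧ p.2.2 ≤ p.1 ∧ p.2.2 ≤ p.2.1} =ᵐ[volume]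
      MeasurableEquiv.prodAssoc.symm ⁻¹' coneOver (Ici (1 : ℝ) ×ˢ Ici (1 : ℝ)) := by
  have hheight : ∀ᵐ p : ℝ × ℝ × ℝ, p.2.2 ≠ 0 :=
    (Measure.quasiMeasurePreserving_snd.comp Measure.quasiMeasurePreserving_snd).ae
      (Measure.ae_ne volume 0)
  filter_upwards [hheight] with ⟨h₁, h₂, x⟩ hx
  refine propext ?_
  change (0 ≤ x ∧ x ≤ h₁ ∧ x ≤ h₂) ↔ (0 < x ∧ 1 ≤ x⁻¹ * h₁ ∧ 1 ≤ x⁻¹ * h₂)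
  rw [(Ne.symm hx).le_iff_lt]
  refine and_congr_right fun hpos ↦ ?_
  rw [le_inv_mul_iff₀ hpos, le_inv_mul_iff₀ hpos, mul_one]

theorem gaussian_Ktilde :
    IntegrableOn
        (fun p : ℝ × ℝ × ℝ =>
          Real.exp (-p.1^2/2) * Real.exp (-p.2.1^2/2) * Real.exp (p.2.2^2/2))
        {p : ℝ × ℝ × ℝ | 0 ≤ p.2.2 ∧ p.2.2 ≤ p.1 ∧ p.2.2 ≤ p.2.1} volume ∧
      ∫ p in {p : ℝ × ℝ × ℝ | 0 ≤ p.2.2 ∧ p.2.2 ≤ p.1 ∧ p.2.2 ≤ p.2.1},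
          Real.exp (-p.1^2/2) * Real.exp (-p.2.1^2/2) * Real.exp (p.2.2^2/2)
        = Real.sqrt (2*π) * Real.log 2 / 2 := by
  refine integrable_and_integral_eq_of_lintegral_ofReal_eq
    (Continuous.aestronglyMeasurable (by fun_prop)) (ae_of_all _ fun p ↦ by positivity)
    (by positivity) ?_
  rw [setLIntegral_congr ae_eq_prodAssoc_symm_preimage_coneOver_quadrant,
    ← setLIntegral_coneOver_quadrant_exp,
    ← volume_preserving_prodAssoc.symm.setLIntegral_comp_preimage_emb
      (MeasurableEquiv.measurableEmbedding _)]
  refine lintegral_congr fun p ↦ congrArg ENNReal.ofReal ?_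
  rw [← exp_add, ← exp_add]
  congr 1
  simp only [MeasurableEquiv.prodAssoc, MeasurableEquiv.symm_mk, MeasurableEquiv.coe_mk,
    Equiv.prodAssoc_symm_apply]
  ring
end
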